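/- arXiv:1808.04166 — 2 statements merged into one kernel-verified Lean document; each statement's English description precedes it below -/
import Mathlib

section
/- Let n, m, r be positive integers with r ≥ 2, and let H be an r-uniform multi-hypergraph with n vertices and m edges. Let X_H be the number of vertices with nonzero in-degree after a random orientation of the edges of H. Then H(X_H) ≤ (1/2)·log₂(n) + (1/2)·log₂(πe). -/
/-- Gaussian comparison of one lattice point with a unit interval. -/
lemma aux_point (n : ℝ) (hn : 1 ≤ n) (d : ℝ) :
    (11 / 12 : ℝ) * Real.exp (-d ^ 2 / n) ≤
      ∫ x in (-(1 / 2) : ℝ)..(1 / 2), Real.exp (-(1 / n) * (x + d) ^ 2) := by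
  have hn0 : 0 < n := by linarith
  have h1 : ∫ x in (-(1 / 2) : ℝ)..(1 / 2),
      Real.exp (-d ^ 2 / n) * (1 - (2 * d / n) * x - (1 / n) * x ^ 2) =
      Real.exp (-d ^ 2 / n) * (1 - 1 / (12 * n)) := by
    rw [intervalIntegral.integral_const_mul]
    congr 1
    rw [intervalIntegral.integral_sub, intervalIntegral.integral_sub,
      intervalIntegral.integral_const_mul, intervalIntegral.integral_const_mul,
      integral_id, integral_pow, intervalIntegral.integral_const]
    · norm_num
    all_goals exact Continuous.intervalIntegrable (by fun_prop) _ _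
  have h2 : Real.exp (-d ^ 2 / n) * (1 - 1 / (12 * n)) ≤
      ∫ x in (-(1 / 2) : ℝ)..(1 / 2), Real.exp (-(1 / n) * (x + d) ^ 2) := by
    rw [← h1]
    apply intervalIntegral.integral_mono_on (by norm_num)
    · exact Continuous.intervalIntegrable (by fun_prop) _ _
    · exact Continuous.intervalIntegrable (by fun_prop) _ _
    · intro x _
      have : -(1 / n) * (x + d) ^ 2 = -d ^ 2 / n + (-(2 * d / n) * x - (1 / n) * x ^ 2) := by
        field_simp
        ring
      rw [this, Real.exp_add]
      apply mul_le_mul_of_nonneg_left _ (Real.exp_pos _).le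
      have := Real.add_one_le_exp (-(2 * d / n) * x - (1 / n) * x ^ 2)
      linarith
  refine le_trans ?_ h2
  rw [mul_comm]
  apply mul_le_mul_of_nonneg_left _ (Real.exp_pos _).le
  have : 1 / (12 * n) ≤ 1 / 12 := by
    apply one_div_le_one_div_of_le <;> linarith
  linarith

lemma aux_theta (n : ℝ) (hn : 1 ≤ n) (c : ℝ) (N : ℕ) :
    (11 / 12 : ℝ) * ∑ k ∈ Finset.range N, Real.exp (-((k : ℝ) - c) ^ 2 / n) ≤
      Real.sqrt (Real.pi * n) := by
  have hn0 : 0 < n := by linarith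
  have hG := integral_gaussian (1 / n)
  have hI : MeasureTheory.Integrable (fun x : ℝ => Real.exp (-(1 / n) * x ^ 2)) :=
    integrable_exp_neg_mul_sq (by positivity)
  have hcont : Continuous (fun x : ℝ => Real.exp (-(1 / n) * x ^ 2)) := by fun_prop
  let a : ℕ → ℝ := fun k => (k : ℝ) - c - 1 / 2
  have h1 : ∀ k : ℕ, (11 / 12 : ℝ) * Real.exp (-((k : ℝ) - c) ^ 2 / n) ≤
      ∫ x in (a k)..(a (k + 1)), Real.exp (-(1 / n) * x ^ 2) := by
    intro k
    refine (aux_point n hn ((k : ℝ) - c)).trans (le_of_eq ?_)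
    rw [intervalIntegral.integral_comp_add_right (fun x => Real.exp (-(1 / n) * x ^ 2))]
    congr 1
    · simp only [a]; ring
    · simp only [a]; push_cast; ring
  rw [Finset.mul_sum]
  refine (Finset.sum_le_sum fun k _ => h1 k).trans ?_
  rw [intervalIntegral.sum_integral_adjacent_intervals
    (fun k _ => hcont.intervalIntegrable _ _)]
  have h0N : a 0 ≤ a N := by simp [a]
  rw [intervalIntegral.integral_of_le h0N]
  refine (MeasureTheory.setIntegral_le_integral hI
    (Filter.Eventually.of_forall fun x => (Real.exp_pos _).le)).trans ?_
  rw [hG]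
  simp

/-- Number of orientations avoiding a set of vertices. -/
lemma aux_count {V : Type*} [Fintype V] [DecidableEq V] {m : ℕ}
    (E : Fin m → Finset V) (S : Finset V) :
    (Finset.univ.filter
      (fun f : {f : Fin m → V // ∀ i, f i ∈ E i} => ∀ i, f.1 i ∉ S)).card =
      ∏ i, (E i \ S).card := by
  rw [← Fintype.card_piFinset]
  refine Finset.card_bij (fun f _ => f.1) ?_ ?_ ?_
  · intro f hf
    simp only [Finset.mem_filter, Finset.mem_univ, true_and] at hf
    simp only [Fintype.mem_piFinset, Finset.mem_sdiff]
    exact fun i => ⟨f.2 i, hf i⟩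
  · intro f _ g _ h
    exact Subtype.ext h
  · intro f hf
    simp only [Fintype.mem_piFinset, Finset.mem_sdiff] at hf
    exact ⟨⟨f, fun i => (hf i).1⟩, by simpa using fun i => (hf i).2, rfl⟩

lemma aux_edge {V : Type*} [DecidableEq V] (A : Finset V) (u v : V) (huv : u ≠ v) :
    (A \ {u, v}).card * A.card ≤ (A \ {u}).card * (A \ {v}).card := by
  have e : A \ {u, v} = (A.erase u).erase v := by
    ext x; simp; tauto
  rw [e, ← Finset.erase_eq, ← Finset.erase_eq]
  by_cases hu : u ∈ A
  · have hcu := Finset.card_erase_add_one hu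
    by_cases hv : v ∈ A
    · have hcv := Finset.card_erase_add_one hv
      have hcuv := Finset.card_erase_add_one (Finset.mem_erase.mpr ⟨huv.symm, hv⟩)
      nlinarith
    · rw [Finset.erase_eq_of_notMem hv,
        Finset.erase_eq_of_notMem (fun h => hv (Finset.mem_of_mem_erase h))]
  · rw [Finset.erase_eq_of_notMem hu, mul_comm]

/-- Variance bound. -/
lemma aux_var {V : Type*} [Fintype V] [DecidableEq V] (m r : ℕ) (hr : 2 ≤ r)
    (E : Fin m → Finset V) (hE : ∀ i, (E i).card = r) :
    ∃ c : ℝ, ∑ f : {f : Fin m → V // ∀ i, f i ∈ E i},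
      (((Finset.univ.filter fun v => ∃ i, f.1 i = v).card : ℝ) - c) ^ 2 ≤
      (r : ℝ) ^ m * (Fintype.card V / 4) := by
  set Ω := {f : Fin m → V // ∀ i, f i ∈ E i}
  have hT : (0 : ℝ) < (r : ℝ) ^ m := by
    have : (0 : ℝ) < r := by exact_mod_cast (by omega : 0 < r)
    positivity
  set T : ℝ := (r : ℝ) ^ m with hTdef
  have hcard : (Fintype.card Ω : ℝ) = T := by
    have := aux_count E ∅
    simp [hE] at this
    rw [hTdef]
    exact_mod_cast this
  let Y : V → Ω → ℝ := fun v f => if ∀ i, f.1 i ≠ v then 1 else 0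
  let p : V → ℝ := fun v => (∑ f, Y v f) / T
  have hX : ∀ f : Ω, ((Finset.univ.filter fun v => ∃ i, f.1 i = v).card : ℝ) =
      Fintype.card V - ∑ v, Y v f := by
    intro f
    have h1 : ∑ v, Y v f = ((Finset.univ.filter fun v => ¬ ∃ i, f.1 i = v).card : ℝ) := by
      simp [Y, Finset.sum_boole]
    rw [h1, eq_sub_iff_add_eq]
    exact_mod_cast Finset.card_filter_add_card_filter_not (s := (Finset.univ : Finset V))
      (fun v => ∃ i, f.1 i = v)
  have hY1 : ∀ v, ∑ f, Y v f = ((∏ i, (E i \ {v}).card : ℕ) : ℝ) := by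
    intro v
    rw [← aux_count, ← Finset.sum_boole]
    apply Finset.sum_congr rfl
    intro f _
    simp only [Y, Finset.mem_singleton, ne_eq]
  have hY2 : ∀ u v, ∑ f, Y u f * Y v f = ((∏ i, (E i \ {u, v}).card : ℕ) : ℝ) := by
    intro u v
    rw [← aux_count, ← Finset.sum_boole]
    apply Finset.sum_congr rfl
    intro f _
    simp only [Y, ← ite_and, mul_ite, mul_one, mul_zero]
    congr 1
    simp only [eq_iff_iff, Finset.mem_insert, Finset.mem_singleton, not_or, forall_and]
    tauto
  have hcov : ∀ u v, u ≠ v → (∑ f, Y u f * Y v f) ≤ T * (p u * p v) := by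
    intro u v huv
    have h : (∏ i, (E i \ {u, v}).card) * r ^ m ≤
        (∏ i, (E i \ {u}).card) * (∏ i, (E i \ {v}).card) := by
      have : r ^ m = ∏ i, (E i).card := by simp [hE]
      rw [this, ← Finset.prod_mul_distrib, ← Finset.prod_mul_distrib]
      exact Finset.prod_le_prod' fun i _ => aux_edge _ _ _ huv
    have h' : (∑ f, Y u f * Y v f) * T ≤ (∑ f, Y u f) * (∑ f, Y v f) := by
      rw [hY2, hY1, hY1, hTdef]
      exact_mod_cast h
    have : T * (p u * p v) = (∑ f, Y u f) * (∑ f, Y v f) / T := by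
      simp only [p]; field_simp
    rw [this, le_div_iff₀ hT]
    exact h'
  have hpT : ∀ v, ∑ f, Y v f = T * p v := by
    intro v; simp only [p]; field_simp
  have hself : ∀ v, ∑ f, Y v f * Y v f = T * p v := by
    intro v
    rw [← hpT]
    apply Finset.sum_congr rfl
    intro f _
    simp only [Y]; split_ifs <;> simp
  have hcc : ∀ u v, ∑ f, (Y u f - p u) * (Y v f - p v) =
      (∑ f, Y u f * Y v f) - T * (p u * p v) := by
    intro u v
    have : ∀ f, (Y u f - p u) * (Y v f - p v) =
      Y u f * Y v f - p v * Y u f - p u * Y v f + p u * p v := fun f => by ring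
    simp only [this, Finset.sum_add_distrib, Finset.sum_sub_distrib, ← Finset.mul_sum, hpT,
      Finset.sum_const, Finset.card_univ, nsmul_eq_mul, hcard]
    ring
  refine ⟨Fintype.card V - ∑ v, p v, ?_⟩
  have h1 : ∀ f : Ω, (((Finset.univ.filter fun v => ∃ i, f.1 i = v).card : ℝ) -
      (Fintype.card V - ∑ v, p v)) ^ 2 = ∑ u, ∑ v, (Y u f - p u) * (Y v f - p v) := by
    intro f
    rw [hX, ← Finset.sum_mul_sum, Finset.sum_sub_distrib]
    ring
  rw [Finset.sum_congr rfl fun f _ => h1 f, Finset.sum_comm]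
  have h2 : ∀ u : V, ∑ f, ∑ v, (Y u f - p u) * (Y v f - p v) ≤ T / 4 := by
    intro u
    rw [Finset.sum_comm]
    simp only [hcc]
    rw [← Finset.add_sum_erase _ _ (Finset.mem_univ u)]
    have h3 : ∑ v ∈ Finset.univ.erase u, ((∑ f, Y u f * Y v f) - T * (p u * p v)) ≤ 0 := by
      apply Finset.sum_nonpos
      intro v hv
      have := hcov u v (Finset.ne_of_mem_erase hv).symm
      linarith
    rw [hself]
    nlinarith [mul_nonneg hT.le (sq_nonneg (p u - 1 / 2))]
  refine (Finset.sum_le_sum fun u _ => h2 u).trans (le_of_eq ?_)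
  simp [Finset.sum_const]
  ring


open Finset

/-- Shannon entropy (base 2) of a random variable `X` defined on a finite sample space
with probability mass function `p`:  `H(X) = -∑_s P[X = s] log₂ P[X = s]`. -/
noncomputable def shannonEntropy {Ω S : Type*} [Fintype Ω] [DecidableEq S]
    (p : Ω → ℝ) (X : Ω → S) : ℝ :=
  -∑ s ∈ Finset.univ.image X,
      (∑ ω ∈ Finset.univ.filter (fun ω => X ω = s), p ω) *
        Real.logb 2 (∑ ω ∈ Finset.univ.filter (fun ω => X ω = s), p ω)

/-- Let `H` be an `r`-uniform multi-hypergraph with `n` vertices and edges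
`E 0, …, E (m-1)` (each an `r`-element subset of `V`, `r ≥ 2`).  A random orientation
assigns to each edge, independently and uniformly, one of its `r` vertices; thus each
orientation `f` (an element of the subtype `{f : Fin m → V // ∀ i, f i ∈ E i}`) has
probability `1 / r ^ m`.  If `X_H` is the number of vertices with nonzero in-degree,
then `H(X_H) ≤ (1/2) log₂ n + (1/2) log₂ (π e)`. -/
theorem entropy_nonzero_indegree_le {V : Type*} [Fintype V] [DecidableEq V]
    (n m r : ℕ) (hn : 0 < n) (hm : 0 < m) (hr : 2 ≤ r)
    (hV : Fintype.card V = n)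
    (E : Fin m → Finset V) (hE : ∀ i, (E i).card = r) :
    shannonEntropy
        (fun _ : {f : Fin m → V // ∀ i, f i ∈ E i} => (1 : ℝ) / r ^ m)
        (fun f => (Finset.univ.filter fun v => ∃ i, f.1 i = v).card) ≤
      (1 / 2) * Real.logb 2 n + (1 / 2) * Real.logb 2 (Real.pi * Real.exp 1) := by
  have hr0 : (0 : ℝ) < r := by exact_mod_cast (by omega : 0 < r)
  have hT : (0 : ℝ) < (r : ℝ) ^ m := by positivity
  have hn1 : (1 : ℝ) ≤ n := by exact_mod_cast hn
  have hn0 : (0 : ℝ) < n := by linarith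
  obtain ⟨c, hc⟩ := aux_var m r hr E hE
  rw [hV] at hc
  have hcard : (Fintype.card {f : Fin m → V // ∀ i, f i ∈ E i} : ℝ) = (r : ℝ) ^ m := by
    have := aux_count E ∅
    simp [hE] at this
    exact_mod_cast this
  unfold shannonEntropy
  set X : {f : Fin m → V // ∀ i, f i ∈ E i} → ℕ :=
    fun f => (Finset.univ.filter fun v => ∃ i, f.1 i = v).card with hXdef
  set P : ℕ → ℝ := fun s => ∑ ω ∈ Finset.univ.filter (fun ω => X ω = s), (1 : ℝ) / r ^ m
    with hPdef
  set Im := Finset.univ.image X with hIm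
  change -∑ s ∈ Im, P s * Real.logb 2 (P s) ≤ _
  have hmaps : ∀ ω ∈ (Finset.univ : Finset {f : Fin m → V // ∀ i, f i ∈ E i}), X ω ∈ Im :=
    fun ω h => Finset.mem_image_of_mem X h
  have hPpos : ∀ s ∈ Im, 0 < P s := by
    intro s hs
    obtain ⟨ω, _, hω⟩ := Finset.mem_image.mp hs
    exact Finset.sum_pos (fun _ _ => by positivity) ⟨ω, by simp [hω]⟩
  have hPsum : ∑ s ∈ Im, P s = 1 := by
    simp only [hPdef]
    rw [Finset.sum_fiberwise_of_maps_to hmaps]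
    rw [Finset.sum_const, Finset.card_univ, nsmul_eq_mul, hcard]
    field_simp
  have hPvar : ∑ s ∈ Im, P s * ((s : ℝ) - c) ^ 2 ≤ n / 4 := by
    have : ∀ s ∈ Im, P s * ((s : ℝ) - c) ^ 2 =
        ∑ ω ∈ Finset.univ.filter (fun ω => X ω = s), (1 : ℝ) / r ^ m * ((X ω : ℝ) - c) ^ 2 := by
      intro s _
      simp only [hPdef]
      rw [Finset.sum_mul]
      apply Finset.sum_congr rfl
      intro ω hω
      rw [(Finset.mem_filter.mp hω).2]
    rw [Finset.sum_congr rfl this, Finset.sum_fiberwise_of_maps_to hmaps, ← Finset.mul_sum,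
      one_div, inv_mul_le_iff₀ hT]
    exact hc
  set Z : ℝ := 12 / 11 * Real.sqrt (Real.pi * n) with hZ
  have hs0 : 0 < Real.sqrt (Real.pi * n) := Real.sqrt_pos.mpr (by positivity)
  have hZ0 : 0 < Z := by positivity
  have hsub : Im ⊆ Finset.range (n + 1) := by
    intro s hs
    obtain ⟨ω, _, rfl⟩ := Finset.mem_image.mp hs
    have : X ω ≤ Fintype.card V := Finset.card_le_univ _
    rw [Finset.mem_range]; omega
  have hq : ∑ s ∈ Im, Real.exp (-((s : ℝ) - c) ^ 2 / n) / Z ≤ 1 := by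
    rw [← Finset.sum_div, div_le_one hZ0]
    have h1 := aux_theta n hn1 c (n + 1)
    have h2 : ∑ s ∈ Im, Real.exp (-((s : ℝ) - c) ^ 2 / n) ≤
        ∑ s ∈ Finset.range (n + 1), Real.exp (-((s : ℝ) - c) ^ 2 / n) :=
      Finset.sum_le_sum_of_subset_of_nonneg hsub fun _ _ _ => (Real.exp_pos _).le
    rw [hZ]; linarith
  have hgibbs : ∀ s ∈ Im, -(P s * Real.log (P s)) ≤
      Real.exp (-((s : ℝ) - c) ^ 2 / n) / Z - P s +
        P s * (((s : ℝ) - c) ^ 2) / n + P s * Real.log Z := by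
    intro s hs
    have hp := hPpos s hs
    have hlog := Real.log_le_sub_one_of_pos
      (show 0 < Real.exp (-((s : ℝ) - c) ^ 2 / n) / Z / P s by positivity)
    rw [Real.log_div (by positivity) hp.ne', Real.log_div (by positivity) hZ0.ne',
      Real.log_exp] at hlog
    have h3 := mul_le_mul_of_nonneg_left hlog hp.le
    have h4 : P s * (Real.exp (-((s : ℝ) - c) ^ 2 / n) / Z / P s - 1) =
        Real.exp (-((s : ℝ) - c) ^ 2 / n) / Z - P s := by
      field_simp
    rw [h4] at h3
    have h5 : P s * (-((s : ℝ) - c) ^ 2 / n - Real.log Z - Real.log (P s)) =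
      -(P s * (((s : ℝ) - c) ^ 2) / n) - P s * Real.log Z - P s * Real.log (P s) := by ring
    rw [h5] at h3
    linarith
  have hnat : -∑ s ∈ Im, P s * Real.log (P s) ≤ 1 / 4 + Real.log Z := by
    rw [← Finset.sum_neg_distrib]
    refine (Finset.sum_le_sum hgibbs).trans ?_
    rw [Finset.sum_add_distrib, Finset.sum_add_distrib, Finset.sum_sub_distrib, hPsum,
      ← Finset.sum_mul, hPsum, ← Finset.sum_div Im (fun s : ℕ => P s * ((s : ℝ) - c) ^ 2)]
    have : (∑ s ∈ Im, P s * ((s : ℝ) - c) ^ 2) / n ≤ 1 / 4 := by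
      rw [div_le_iff₀ hn0]; linarith
    linarith
  have hlogZ : Real.log Z ≤ 1 / 11 + (Real.log Real.pi + Real.log n) / 2 := by
    rw [hZ, Real.log_mul (by norm_num) hs0.ne', Real.log_sqrt (by positivity),
      Real.log_mul Real.pi_pos.ne' hn0.ne']
    have := Real.log_le_sub_one_of_pos (show (0 : ℝ) < 12 / 11 by norm_num)
    linarith
  have hl2 : 0 < Real.log 2 := Real.log_pos (by norm_num)
  have hL : -∑ s ∈ Im, P s * Real.logb 2 (P s) =
      (-∑ s ∈ Im, P s * Real.log (P s)) / Real.log 2 := by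
    simp only [Real.logb, ← mul_div_assoc]
    rw [← Finset.sum_div, neg_div]
  have hR : (1 / 2) * Real.logb 2 n + (1 / 2) * Real.logb 2 (Real.pi * Real.exp 1) =
      ((Real.log n + Real.log Real.pi + 1) / 2) / Real.log 2 := by
    simp only [Real.logb]
    rw [Real.log_mul Real.pi_pos.ne' (Real.exp_pos _).ne', Real.log_exp]
    ring
  rw [hL, hR]
  apply div_le_div_of_nonneg_right _ hl2.le
  linarith
end

section
/- Let C_n be the cycle on n ≥ 3 vertices and let X_{C_n} be the number of vertices with nonzero in-degree after a random orientation of the edges of C_n. Then H(X_{C_n}) ≥ (1/2)·log₂(n) + (1/2)·log₂(πe) − 3/2 − 1/(2·ln(2)·(n−1)). -/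
open Finset

theorem cyc_central (k : ℕ) (hk : 1 ≤ k) :
    Real.log ((2 * k).choose k) ≤ (2 * k : ℕ) * Real.log 2 + 1 / 2 * Real.log (1 / (Real.pi * k)) := by
  have h1 := Real.Wallis.le_W k
  rw [Real.Wallis.W_eq_factorial_ratio] at h1
  have hc : (0:ℝ) < ((2 * k).choose k : ℝ) := by
    exact_mod_cast Nat.choose_pos (by omega)
  have hf : ((2 * k).factorial : ℝ) = ((2*k).choose k : ℝ) * (k.factorial : ℝ) ^ 2 := by
    have := Nat.choose_mul_factorial_mul_factorial (show k ≤ 2 * k by omega)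
    rw [show 2 * k - k = k by omega] at this
    rw [← this]; push_cast; ring
  have hkf : (0:ℝ) < (k.factorial : ℝ) := by exact_mod_cast Nat.factorial_pos k
  have hk' : (1:ℝ) ≤ k := by exact_mod_cast hk
  have hpi := Real.pi_pos
  set c : ℝ := ((2 * k).choose k : ℝ) with hcdef
  have h2 : (2:ℝ) ^ (4 * k) * (k.factorial : ℝ) ^ 4 / (((2 * k).factorial : ℝ) ^ 2 * (2 * k + 1))
      = 2 ^ (4 * k) / (c ^ 2 * (2 * k + 1)) := by
    rw [hf]; field_simp
  rw [h2, le_div_iff₀ (by positivity)] at h1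
  have h3 : c ^ 2 ≤ 2 ^ (4 * k) * (1 / (Real.pi * k)) := by
    rw [mul_one_div, le_div_iff₀ (by positivity)]
    refine le_trans ?_ h1
    have h4 : ((2 * k + 1) / (2 * k + 2) * (Real.pi / 2) * (c ^ 2 * (2 * k + 1)) : ℝ)
        = c ^ 2 * Real.pi * ((2 * k + 1) ^ 2 / (4 * (k + 1))) := by field_simp; ring
    rw [h4, ← mul_assoc]
    have : (k : ℝ) ≤ (2 * k + 1) ^ 2 / (4 * (k + 1)) := by
      rw [le_div_iff₀ (by positivity)]; nlinarith
    gcongr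
  have h5 := Real.log_le_log (by positivity) h3
  rw [Real.log_mul (by positivity) (by positivity), Real.log_pow, Real.log_pow] at h5
  push_cast at h5 ⊢
  linarith

theorem cyc_step (n j : ℕ) (hj : n ≤ 2 * j) (hjn : j + 1 ≤ n) :
    Real.log (n.choose (j+1)) + (2 * ((j + 1 : ℕ) : ℝ) - n) ^ 2 / (2 * (n + 1)) ≤
    Real.log (n.choose j) + (2 * (j:ℝ) - n) ^ 2 / (2 * (n + 1)) := by
  have h := Nat.choose_succ_right_eq n j
  have hr : (n.choose (j+1) : ℝ) * (j + 1) = n.choose j * (n - j) := by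
    have : ((n - j : ℕ) : ℝ) = n - j := by rw [Nat.cast_sub (by omega)]
    rw [← this]; exact_mod_cast h
  have hc : (0:ℝ) < n.choose j := by exact_mod_cast Nat.choose_pos (by omega)
  have hj' : (n : ℝ) ≤ 2 * j := by exact_mod_cast hj
  have hjn' : (j : ℝ) + 1 ≤ n := by exact_mod_cast hjn
  have hj0 : (0:ℝ) ≤ j := by positivity
  set x : ℝ := (2 * j + 1 - n) / (n + 1) with hx
  have hx0 : 0 ≤ x := div_nonneg (by linarith) (by linarith)
  have hx1 : x < 1 := by rw [hx, div_lt_one (by linarith)]; linarith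
  have hq : (n.choose (j+1) : ℝ) = n.choose j * ((1 - x) / (1 + x)) := by
    have e1 : 1 - x = 2 * (n - j) / (n + 1) := by rw [hx]; field_simp; ring
    have e2 : 1 + x = 2 * (j + 1) / (n + 1) := by rw [hx]; field_simp; ring
    rw [e1, e2]; field_simp; linarith
  have hat : 2 * x ≤ Real.log (1 + x) - Real.log (1 - x) := by
    have hs := Real.hasSum_log_sub_log_of_abs_lt_one (x := x) (by rw [abs_of_nonneg hx0]; exact hx1)
    have := hs.summable.le_tsum 0 (fun i _ => by positivity)
    rw [hs.tsum_eq] at this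
    simpa using this
  rw [hq, Real.log_mul hc.ne' (div_pos (by linarith) (by linarith)).ne',
    Real.log_div (by linarith) (by linarith)]
  have : (2 * ((j + 1 : ℕ) : ℝ) - n) ^ 2 / (2 * (n + 1)) = (2 * (j:ℝ) - n) ^ 2 / (2 * (n + 1)) + 2 * x := by
    rw [hx]; push_cast; field_simp; ring
  linarith

theorem cyc_upper_half (n : ℕ) (hn : 1 ≤ n) (j : ℕ) (hj : n ≤ 2 * j) (hjn : j ≤ n) :
    Real.log (n.choose j) + (2 * (j:ℝ) - n) ^ 2 / (2 * (n + 1)) ≤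
      n * Real.log 2 + 1 / 2 * Real.log (2 / (Real.pi * n)) := by
  have hpi := Real.pi_pos
  obtain ⟨m, hm | hm⟩ := n.even_or_odd'
  · have hmj : m ≤ j := by omega
    clear hj
    induction j, hmj using Nat.le_induction with
    | base =>
      have := cyc_central m (by omega)
      have hm0 : (0:ℝ) < m := by exact_mod_cast (by omega : 0 < m)
      rw [hm]
      have e : (2:ℝ) / (Real.pi * (2 * m : ℕ)) = 1 / (Real.pi * m) := by push_cast; field_simp
      rw [e]; push_cast at this ⊢; simpa using this
    | succ j h ih => exact (cyc_step n j (by omega) hjn).trans (ih (by omega))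
  · have hmj : m + 1 ≤ j := by omega
    clear hj
    induction j, hmj using Nat.le_induction with
    | base =>
      have h1 := cyc_central (m+1) (by omega)
      have hcc : (2 * (m + 1)).choose (m + 1) = 2 * (2 * m + 1).choose (m + 1) := by
        have := Nat.choose_succ_succ (2 * m + 1) m
        have h2 := Nat.choose_symm_half m
        rw [show 2 * (m + 1) = (2 * m + 1) + 1 by ring]
        simp only [Nat.succ_eq_add_one] at this
        omega
      have hc : (0:ℝ) < (2 * m + 1).choose (m + 1) := by exact_mod_cast Nat.choose_pos (by omega)
      rw [hcc, Nat.cast_mul, Real.log_mul (by norm_num) hc.ne'] at h1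
      rw [hm]
      push_cast at h1 ⊢
      have hm0 : (0:ℝ) ≤ m := by positivity
      rw [Real.log_div (by norm_num) (by positivity), Real.log_mul hpi.ne' (by positivity)] at h1 ⊢
      have hl := Real.one_sub_inv_le_log_of_pos (x := (2 * (m:ℝ) + 2) / (2 * m + 1)) (by positivity)
      rw [Real.log_div (by positivity) (by positivity), show (2 * (m:ℝ) + 2) = 2 * (m + 1) by ring,
        Real.log_mul (by norm_num) (by positivity)] at hl
      have e1 : 1 - (2 * ((m:ℝ) + 1) / (2 * m + 1))⁻¹ = 1 / (2 * (m + 1)) := by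
        field_simp; ring
      have e2 : (2 * ((m:ℝ) + 1) - (2 * m + 1)) ^ 2 / (2 * (2 * m + 1 + 1)) = 1 / 2 * (1 / (2 * (m + 1))) := by
        field_simp; ring
      rw [e1] at hl
      rw [e2]
      simp only [Real.log_one] at h1
      linarith
    | succ j h ih => exact (cyc_step n j (by omega) hjn).trans (ih (by omega))

theorem cyc_binom (n : ℕ) (hn : 1 ≤ n) (j : ℕ) (hjn : j ≤ n) :
    Real.log (n.choose j) + (2 * (j:ℝ) - n) ^ 2 / (2 * (n + 1)) ≤
      n * Real.log 2 + 1 / 2 * Real.log (2 / (Real.pi * n)) := by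
  rcases le_total n (2 * j) with h | h
  · exact cyc_upper_half n hn j h hjn
  · have := cyc_upper_half n hn (n - j) (by omega) (by omega)
    rw [Nat.choose_symm hjn, Nat.cast_sub hjn] at this
    convert this using 3
    ring

theorem cyc_entropy_ge {Ω S : Type*} [Fintype Ω] [DecidableEq S]
    (p : Ω → ℝ) (X : Ω → S) (hp : ∀ ω, 0 ≤ p ω) (φ : Ω → ℝ)
    (h : ∀ ω, Real.logb 2 (∑ ω' ∈ Finset.univ.filter (fun ω' => X ω' = X ω), p ω') ≤ φ ω) :
    -∑ ω, p ω * φ ω ≤ shannonEntropy p X := by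
  unfold shannonEntropy
  rw [neg_le_neg_iff, ← Finset.sum_fiberwise_of_maps_to (s := univ) (t := univ.image X) (g := X)
    (fun ω _ => mem_image_of_mem X (mem_univ ω))]
  refine sum_le_sum fun s _ => ?_
  rw [sum_mul]
  refine sum_le_sum fun ω hω => ?_
  have := (mem_filter.mp hω).2
  subst this
  exact mul_le_mul_of_nonneg_left (h ω) (hp ω)

/-- sign of an edge -/
def cycSign {n : ℕ} (b : ZMod n → Bool) (i : ZMod n) : ℝ := if b i then 1 else -1

theorem cycSign_sq {n : ℕ} (b : ZMod n → Bool) (i : ZMod n) : cycSign b i * cycSign b i = 1 := by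
  unfold cycSign; split <;> norm_num

theorem cycSign_flip_same {n : ℕ} (b : ZMod n → Bool) (i : ZMod n) :
    cycSign (Function.update b i (!(b i))) i = - cycSign b i := by
  unfold cycSign; cases h : b i <;> simp

theorem cycSign_flip_ne {n : ℕ} (b : ZMod n → Bool) (i j : ZMod n) (h : j ≠ i) :
    cycSign (Function.update b i (!(b i))) j = cycSign b j := by
  unfold cycSign; simp [h]

theorem cyc_flip_sum {n : ℕ} [NeZero n] (F : (ZMod n → Bool) → ℝ) (i : ZMod n)
    (h : ∀ b, F (Function.update b i (!(b i))) = - F b) : ∑ b, F b = 0 := by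
  have hinv : Function.Involutive (fun b : ZMod n → Bool => Function.update b i (!(b i))) := by
    intro b; simp
  have := Equiv.sum_comp hinv.toPerm F
  simp only [Function.Involutive.coe_toPerm, h, sum_neg_distrib] at this
  linarith

theorem cyc_cross {n : ℕ} [NeZero n] (hn : 3 ≤ n) (u v : ZMod n) (huv : u ≠ v) :
    ∑ b : ZMod n → Bool, (cycSign b (u-1) * cycSign b u) * (cycSign b (v-1) * cycSign b v) = 0 := by
  have : Fact (1 < n) := ⟨by omega⟩
  have h1 : (1 : ZMod n) ≠ 0 := one_ne_zero
  have h2 : (2 : ZMod n) ≠ 0 := by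
    intro h
    have : ((2:ℕ) : ZMod n) = 0 := by exact_mod_cast h
    rw [ZMod.natCast_eq_zero_iff] at this
    exact absurd (Nat.le_of_dvd (by norm_num) this) (by omega)
  by_cases h : u = v - 1
  · apply cyc_flip_sum _ v
    intro b
    rw [cycSign_flip_same, cycSign_flip_ne b v u huv, cycSign_flip_ne b v (v-1) (by rw [← h]; exact huv),
      cycSign_flip_ne b v (u-1) (by rw [h]; intro h'; apply h2; linear_combination -h')]
    ring
  · apply cyc_flip_sum _ u
    intro b
    rw [cycSign_flip_same, cycSign_flip_ne b u v (Ne.symm huv), cycSign_flip_ne b u (v-1) (Ne.symm h),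
      cycSign_flip_ne b u (u-1) (by intro h'; apply h1; linear_combination -h')]
    ring

theorem cyc_second_moment {n : ℕ} [NeZero n] (hn : 3 ≤ n) :
    ∑ b : ZMod n → Bool, (∑ v, cycSign b (v-1) * cycSign b v) ^ 2 = n * 2 ^ n := by
  simp_rw [sq, sum_mul_sum]
  rw [sum_comm]
  simp_rw [sum_comm (s := (univ : Finset (ZMod n → Bool)))]
  have : ∀ u v : ZMod n, ∑ b : ZMod n → Bool, (cycSign b (u-1) * cycSign b u) * (cycSign b (v-1) * cycSign b v)
      = if u = v then (2:ℝ) ^ n else 0 := by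
    intro u v
    split_ifs with h
    · subst h
      have : ∀ b : ZMod n → Bool, (cycSign b (u-1) * cycSign b u) * (cycSign b (u-1) * cycSign b u) = 1 := by
        intro b
        rw [mul_mul_mul_comm, cycSign_sq, cycSign_sq, one_mul]
      simp [this, ZMod.card]
    · exact cyc_cross hn u v h
  simp_rw [this]
  simp [ZMod.card]

/-- number of sources -/
def cycSrc {n : ℕ} [NeZero n] (b : ZMod n → Bool) : ℕ :=
  (univ.filter fun v : ZMod n => b (v-1) = false ∧ b v = true).card

/-- set of changes -/
def cycChg {n : ℕ} [NeZero n] (b : ZMod n → Bool) : Finset (ZMod n) :=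
  univ.filter fun v : ZMod n => b (v-1) ≠ b v

theorem cycChg_card {n : ℕ} [NeZero n] (b : ZMod n → Bool) : (cycChg b).card = 2 * cycSrc b := by
  have h1 : ∑ v : ZMod n, ((if b (v-1) then 1 else 0) : ℤ) = ∑ v : ZMod n, (if b v then 1 else 0) :=
    Equiv.sum_comp (Equiv.subRight (1 : ZMod n)) (fun v => ((if b v then 1 else 0) : ℤ))
  have h2 : ((cycChg b).card : ℤ) = ∑ v : ZMod n, (2 * (if b (v-1) = false ∧ b v = true then 1 else 0)
     + (if b (v-1) then 1 else 0) - (if b v then 1 else 0)) := by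
    unfold cycChg
    rw [card_filter]
    push_cast
    refine sum_congr rfl fun v _ => ?_
    cases b (v-1) <;> cases b v <;> simp
  rw [sum_sub_distrib, sum_add_distrib, h1, ← mul_sum] at h2
  have h3 : (cycSrc b : ℤ) = ∑ v : ZMod n, (if b (v-1) = false ∧ b v = true then 1 else 0) := by
    unfold cycSrc; rw [card_filter]; push_cast; rfl
  rw [← h3] at h2
  omega

theorem cyc_corr {n : ℕ} [NeZero n] (b : ZMod n → Bool) :
    ∑ v, cycSign b (v-1) * cycSign b v = n - 2 * (2 * cycSrc b : ℕ) := by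
  rw [← cycChg_card]
  have : ∀ v, cycSign b (v-1) * cycSign b v = 1 - 2 * (if b (v-1) ≠ b v then 1 else 0) := by
    intro v; unfold cycSign
    cases b (v-1) <;> cases b v <;> norm_num
  simp_rw [this]
  rw [sum_sub_distrib, ← mul_sum]
  unfold cycChg
  rw [card_filter]
  push_cast
  simp [ZMod.card]

theorem cyc_inj {n : ℕ} [NeZero n] (b b' : ZMod n → Bool) (h0 : b 0 = b' 0)
    (h : cycChg b = cycChg b') : b = b' := by
  have hk : ∀ k : ℕ, b (k : ZMod n) = b' (k : ZMod n) := by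
    intro k
    induction k with
    | zero => simpa using h0
    | succ k ih =>
      have := Finset.ext_iff.mp h ((k + 1 : ℕ) : ZMod n)
      simp only [cycChg, mem_filter, mem_univ, true_and, Nat.cast_add, Nat.cast_one,
        add_sub_cancel_right, ih] at this
      push_cast
      revert this
      cases b' (k : ZMod n) <;> cases b ((k:ZMod n) + 1) <;> cases b' ((k:ZMod n) + 1) <;> simp
  funext i
  have := hk i.val
  simpa using this

theorem cyc_fiber {n : ℕ} [NeZero n] (k : ℕ) :
    (univ.filter fun b : ZMod n → Bool => cycSrc b = k).card ≤ 2 * n.choose (2 * k) := by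
  have : (univ.filter fun b : ZMod n → Bool => cycSrc b = k).card ≤
      ((univ : Finset Bool) ×ˢ (powersetCard (2 * k) (univ : Finset (ZMod n)))).card := by
    apply card_le_card_of_injOn (fun b => (b 0, cycChg b))
    · intro b hb
      have hb' : cycSrc b = k := by simpa using hb
      simp [mem_powersetCard, cycChg_card, hb']
    · intro b _ b' _ h
      simp only [Prod.mk.injEq] at h
      exact cyc_inj b b' h.1 h.2
  simpa [card_product, ZMod.card] using this

theorem cyc_src_le {n : ℕ} [NeZero n] (b : ZMod n → Bool) : 2 * cycSrc b ≤ n := by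
  rw [← cycChg_card]
  simpa [ZMod.card] using card_le_univ (cycChg b)

/-- orientations correspond to Boolean functions -/
def cycOr {n : ℕ} (b : ZMod n → Bool) : {g : ZMod n → ZMod n // ∀ i, g i = i ∨ g i = i + 1} :=
  ⟨fun i => if b i then i + 1 else i, fun i => by
    by_cases h : b i = true <;> simp [h]⟩

theorem cycOr_bij {n : ℕ} (hn : 3 ≤ n) : Function.Bijective (cycOr (n := n)) := by
  have : Fact (1 < n) := ⟨by omega⟩
  constructor
  · intro b b' h
    funext i
    have := congrFun (congrArg Subtype.val h) i
    simp only [cycOr] at this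
    revert this
    cases b i <;> cases b' i <;> simp
  · intro g
    refine ⟨fun i => decide (g.1 i = i + 1), ?_⟩
    apply Subtype.ext
    funext i
    simp only [cycOr, decide_eq_true_eq]
    split_ifs with h
    · exact h.symm
    · exact ((g.2 i).resolve_right h).symm

theorem cycOr_count {n : ℕ} [NeZero n] (hn : 3 ≤ n) (b : ZMod n → Bool) :
    (Finset.univ.filter fun v : ZMod n => ∃ i, (cycOr b).1 i = v).card + cycSrc b = n := by
  have : Fact (1 < n) := ⟨by omega⟩
  have h := card_filter_add_card_filter_not (s := (univ : Finset (ZMod n)))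
    (fun v : ZMod n => ∃ i, (cycOr b).1 i = v)
  rw [card_univ, ZMod.card] at h
  refine Eq.trans ?_ h
  congr 1
  unfold cycSrc
  congr 1
  ext v
  simp only [mem_filter, mem_univ, true_and, cycOr, not_exists]
  constructor
  · rintro ⟨h1, h2⟩ i hi
    split_ifs at hi with hb
    · have : i = v - 1 := by rw [← hi]; ring
      rw [this, h1] at hb; simp at hb
    · rw [hi] at hb; exact hb h2
  · intro hi
    constructor
    · have := hi (v-1)
      by_contra hb
      simp at hb
      simp [hb] at this
    · have := hi v
      by_contra hb
      simp at hb
      simp [hb] at this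

/-- Consider the cycle `C_n` (`n ≥ 3`) with vertex set `ZMod n` and edges `{i, i+1}`.
A random orientation assigns to each edge `{i, i+1}`, independently and uniformly,
one of its two endpoints; an orientation is an element `g` of the subtype
`{g : ZMod n → ZMod n // ∀ i, g i = i ∨ g i = i + 1}`, each having probability
`1 / 2 ^ n`.  If `X_{C_n}` is the number of vertices with nonzero in-degree, then
`H(X_{C_n}) ≥ (1/2) log₂ n + (1/2) log₂ (π e) - 3/2 - 1/(2 ln 2 (n-1))`. -/
theorem cycle_entropy_lower_bound (n : ℕ) [NeZero n] (hn : 3 ≤ n) :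
    shannonEntropy
        (fun _ : {g : ZMod n → ZMod n // ∀ i, g i = i ∨ g i = i + 1} =>
          (1 : ℝ) / 2 ^ n)
        (fun g => (Finset.univ.filter fun v : ZMod n => ∃ i, g.1 i = v).card) ≥
      (1 / 2) * Real.logb 2 n + (1 / 2) * Real.logb 2 (Real.pi * Real.exp 1) -
        3 / 2 - 1 / (2 * Real.log 2 * ((n : ℝ) - 1)) := by
  have hpi := Real.pi_pos
  have hn0 : (3:ℝ) ≤ n := by exact_mod_cast hn
  have hl2 : 0 < Real.log 2 := Real.log_pos (by norm_num)
  let e := Equiv.ofBijective (cycOr (n := n)) (cycOr_bij hn)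
  let A : ℝ := 1 / 2 * Real.log (2 / (Real.pi * n)) + Real.log 2
  let ψ : (ZMod n → Bool) → ℝ := fun b =>
    (A - (∑ v, cycSign b (v-1) * cycSign b v) ^ 2 / (2 * (n + 1))) / Real.log 2
  have key := cyc_entropy_ge
    (fun _ : {g : ZMod n → ZMod n // ∀ i, g i = i ∨ g i = i + 1} => (1 : ℝ) / 2 ^ n)
    (fun g => (Finset.univ.filter fun v : ZMod n => ∃ i, g.1 i = v).card)
    (fun _ => by positivity) (fun g => ψ (e.symm g)) (by
      intro g
      obtain ⟨b, rfl⟩ := e.surjective g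
      rw [Equiv.symm_apply_apply, sum_filter, ← Equiv.sum_comp e]
      have hX : ∀ b' : ZMod n → Bool,
          ((Finset.univ.filter fun v : ZMod n => ∃ i, (e b').1 i = v).card =
          (Finset.univ.filter fun v : ZMod n => ∃ i, (e b).1 i = v).card) ↔
          cycSrc b' = cycSrc b := by
        intro b'
        have h1 := cycOr_count hn b
        have h2 := cycOr_count hn b'
        simp only [e, Equiv.ofBijective_apply]
        omega
      simp only [hX]
      rw [← sum_filter, sum_const, nsmul_eq_mul]
      have hpos : 0 < (univ.filter fun b' : ZMod n → Bool => cycSrc b' = cycSrc b).card :=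
        card_pos.mpr ⟨b, by simp⟩
      have hfib := cyc_fiber (n := n) (cycSrc b)
      have hbin := cyc_binom n (by omega) (2 * cycSrc b) (cyc_src_le b)
      set N := (univ.filter fun b' : ZMod n → Bool => cycSrc b' = cycSrc b).card with hN
      have hpos' : (0:ℝ) < N := by exact_mod_cast hpos
      have hfib' : (N:ℝ) ≤ 2 * n.choose (2 * cycSrc b) := by exact_mod_cast hfib
      have hch : (0:ℝ) < n.choose (2 * cycSrc b) := by
        exact_mod_cast Nat.choose_pos (cyc_src_le b)
      have hlog := Real.log_le_log hpos' hfib'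
      rw [Real.log_mul (by norm_num) hch.ne'] at hlog
      unfold Real.logb
      simp only [ψ, A]
      rw [cyc_corr]
      apply div_le_div_of_nonneg_right _ hl2.le
      rw [mul_one_div, Real.log_div hpos'.ne' (by positivity), Real.log_pow]
      rw [show ((n:ℝ) - 2 * (2 * cycSrc b : ℕ)) ^ 2 = (2 * (2 * cycSrc b : ℕ) - (n:ℝ)) ^ 2 by ring]
      linarith)
  refine le_trans ?_ key
  rw [Equiv.sum_comp e.symm (fun b => (1:ℝ) / 2 ^ n * ψ b), ← mul_sum]
  have hs : ∑ b, ψ b = 2 ^ n * ((A - n / (2 * (n + 1))) / Real.log 2) := by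
    simp only [ψ]
    rw [← sum_div, sum_sub_distrib, ← sum_div, cyc_second_moment hn]
    simp only [sum_const, card_univ, Fintype.card_fun, ZMod.card, Fintype.card_bool, nsmul_eq_mul]
    push_cast
    ring
  rw [hs, ← mul_assoc, one_div_mul_cancel (by positivity), one_mul]
  simp only [A]
  unfold Real.logb
  rw [Real.log_div (by norm_num) (by positivity), Real.log_mul hpi.ne' (by positivity),
    Real.log_mul hpi.ne' (by positivity), Real.log_exp]
  have hle : 1 / (2 * ((n:ℝ) + 1)) ≤ 1 / (2 * ((n:ℝ) - 1)) :=
    one_div_le_one_div_of_le (by linarith) (by linarith)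
  have e1 : (n:ℝ) / (2 * (n + 1)) = 1 / 2 - 1 / (2 * ((n:ℝ) + 1)) := by field_simp; ring
  have e2 : 1 / (2 * Real.log 2 * ((n:ℝ) - 1)) = (1 / (2 * ((n:ℝ) - 1))) / Real.log 2 := by
    have : (n:ℝ) - 1 ≠ 0 := by linarith
    field_simp
  rw [e1, e2, ← neg_div, le_div_iff₀ hl2]
  have e3 : ∀ x y z : ℝ, (1 / 2 * (x / Real.log 2) + 1 / 2 * (y / Real.log 2) - 3 / 2 - z / Real.log 2) * Real.log 2
      = 1 / 2 * x + 1 / 2 * y - 3 / 2 * Real.log 2 - z := by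
    intro x y z; field_simp
  rw [e3]
  linarith
end
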